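/- arXiv:1506.07560 — 2 statements merged into one kernel-verified Lean document; each statement's English description precedes it below -/
import Mathlib

section
/- Let T > 0, k > 0, c ∈ ℝ and b ∈ ℝ. Suppose w is a real-valued 2π-periodic function of class H¹ (i.e. ∑_{n∈ℤ}(1 + n²)|ŵ_n|² < ∞) that satisfies the steady Whitham equation M_k w − c·w + w² = b in the Fourier sense: for every n ∈ ℤ, m(kn)·ŵ_n − c·ŵ_n + (w²)^_n equals b if n = 0 and equals 0 otherwise. Then w is smooth: for every s ≥ 0, ∑_{n∈ℤ}(1 + n²)^s |ŵ_n|² < ∞. -/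
open Real Filter

/-- The capillary Whitham symbol `m(z) = √(gd(1 + τ z²) tanh z / z)`, `m(0) = √(gd)`,
with `τ = T/(g d²)`. -/
noncomputable def mW (g d T : ℝ) (z : ℝ) : ℝ :=
  if z = 0 then Real.sqrt (g * d)
  else Real.sqrt (g * d * (1 + T / (g * d ^ 2) * z ^ 2) * Real.tanh z / z)

/-!
Away from zero frequency `tanh z / z` decays only like `1 / |z|`, so surface tension makes `m(z)`
grow at least like `|z|^(1/2)`, and `m - c` does the same for every constant `c`. For `n ≠ 0` the
steady equation reads `(c - m(kn)) ŵₙ = (w²)^ₙ`. The weights `(1 + |n|)^s`, `s ≥ 0`, are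
submultiplicative, so the corresponding weighted `ℓ¹` spaces are stable under convolution. Hence
`ŵ` in the space of weight `s` forces `ŵ` into the space of weight `s + 1/2`; starting from
`ŵ ∈ ℓ¹`, which follows from `w ∈ H¹`, all weights are reached.
-/

open Asymptotics

section Summability

variable {ι : Type*}

lemma summable_of_summable_inv_of_summable_mul_sq {ω f : ι → ℝ} (hω : ∀ i, 0 < ω i)
    (hinv : Summable fun i => (ω i)⁻¹) (hsq : Summable fun i => ω i * f i ^ 2) :
    Summable f := by
  refine Summable.of_norm_bounded (hinv.add hsq) fun i => ?_
  have hpos : 0 < (ω i)⁻¹ := inv_pos.2 (hω i)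
  -- AM-GM: `2 |f| ≤ ω⁻¹ + ω f²`.
  have hsquare : 0 ≤ (ω i)⁻¹ * (1 - ω i * |f i|) ^ 2 := by positivity
  have hexpand : (ω i)⁻¹ * (1 - ω i * |f i|) ^ 2 = (ω i)⁻¹ + ω i * f i ^ 2 - 2 * |f i| := by
    rw [← sq_abs (f i)]
    field_simp [(hω i).ne']
    ring
  rw [Real.norm_eq_abs]
  linarith [abs_nonneg (f i)]

lemma summable_sq_of_summable {f : ι → ℝ} (hf : Summable f) : Summable fun i => f i ^ 2 := by
  have hbounded : f =O[cofinite] fun _ => (1 : ℝ) := hf.tendsto_cofinite_zero.isBigO_one ℝ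
  exact summable_of_isBigO hf <| by simpa [sq] using (isBigO_refl f cofinite).mul hbounded

lemma summable_mul_norm_of_isBigO_smul {𝕜 E : Type*} [NormedField 𝕜] [SeminormedAddCommGroup E]
    [NormedSpace 𝕜 E] {ω σ : ι → ℝ} {m : ι → 𝕜} {u : ι → E} (hm : σ =O[cofinite] m)
    (hmu : Summable fun i => ω i * ‖m i • u i‖) :
    Summable fun i => ω i * σ i * ‖u i‖ := by
  refine summable_of_isBigO hmu ?_
  simpa only [norm_smul, mul_assoc] using
    (isBigO_refl ω cofinite).mul (hm.norm_right.mul (isBigO_refl (fun i => ‖u i‖) cofinite))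

end Summability

section Convolution

variable {G A : Type*}

lemma summable_prod_mul_sub [AddGroup G] {f g : G → ℝ} (hf₀ : 0 ≤ f) (hg₀ : 0 ≤ g)
    (hf : Summable f) (hg : Summable g) :
    Summable fun p : G × G => f p.2 * g (p.1 - p.2) := by
  let shear : G × G ≃ G × G := (Equiv.prodComm G G).trans (Equiv.prodShear (.refl G) Equiv.subRight)
  exact shear.summable_iff.2 (hf.mul_of_nonneg hg hf₀ hg₀)

lemma summable_mul_norm_convolution [AddCommGroup G] [NonUnitalSeminormedRing A] {ω : G → ℝ}
    (hω : ∀ x, 0 < ω x) (hω_add : ∀ x y, ω (x + y) ≤ ω x * ω y) {f g : G → A}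
    (hf : Summable fun x => ω x * ‖f x‖) (hg : Summable fun x => ω x * ‖g x‖) :
    Summable fun x => ω x * ‖∑' y, f y * g (x - y)‖ := by
  have hω₀ (h : G → A) : 0 ≤ fun x => ω x * ‖h x‖ :=
    fun x => mul_nonneg (hω x).le (norm_nonneg _)
  have hfg := summable_prod_mul_sub (hω₀ f) (hω₀ g) hf hg
  refine hfg.prod.of_nonneg_of_le (fun x => mul_nonneg (hω x).le (norm_nonneg _)) fun x => ?_
  have hterm (y : G) :
      ‖f y * g (x - y)‖ ≤ (ω x)⁻¹ * ((ω y * ‖f y‖) * (ω (x - y) * ‖g (x - y)‖)) := by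
    rw [le_inv_mul_iff₀ (hω x)]
    calc ω x * ‖f y * g (x - y)‖
        ≤ (ω y * ω (x - y)) * (‖f y‖ * ‖g (x - y)‖) := by
          gcongr
          · exact mul_nonneg (hω y).le (hω _).le
          · simpa using hω_add y (x - y)
          · exact norm_mul_le _ _
      _ = (ω y * ‖f y‖) * (ω (x - y) * ‖g (x - y)‖) := by ring
  rw [← le_inv_mul_iff₀ (hω x)]
  exact tsum_of_norm_bounded ((hfg.prod_factor x).hasSum.mul_left _) hterm

end Convolution

section Regularity

variable {G A 𝕜 : Type*} [SeminormedAddCommGroup G]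

lemma one_add_norm_add_rpow_le {s : ℝ} (hs : 0 ≤ s) (x y : G) :
    (1 + ‖x + y‖) ^ s ≤ (1 + ‖x‖) ^ s * (1 + ‖y‖) ^ s := by
  rw [← Real.mul_rpow (by positivity) (by positivity)]
  gcongr
  nlinarith [norm_add_le x y, mul_nonneg (norm_nonneg x) (norm_nonneg y)]

lemma summable_one_add_norm_rpow_mul_norm_of_smul_eq_convolution [NormedField 𝕜]
    [NonUnitalSeminormedRing A] [NormedSpace 𝕜 A] {m : G → 𝕜} {u : G → A} {r : ℝ} (hr : 0 < r)
    (hm : (fun x => (1 + ‖x‖) ^ r) =O[cofinite] m)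
    (heq : ∀ᶠ x in cofinite, m x • u x = ∑' y, u y * u (x - y))
    (hu : Summable fun x => ‖u x‖) (s : ℝ) :
    Summable fun x => (1 + ‖x‖) ^ s * ‖u x‖ := by
  have hmultiples (N : ℕ) : Summable fun x => (1 + ‖x‖) ^ (N * r) * ‖u x‖ := by
    induction N with
    | zero => simpa using hu
    | succ N ih =>
      have hconv : Summable fun x => (1 + ‖x‖) ^ (N * r) * ‖∑' y, u y * u (x - y)‖ :=
        summable_mul_norm_convolution (fun x => by positivity)
          (one_add_norm_add_rpow_le (by positivity)) ih ih
      have hmu : Summable fun x => (1 + ‖x‖) ^ (N * r) * ‖m x • u x‖ :=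
        hconv.congr_cofinite (heq.mono fun x hx => by simp only [hx])
      refine (summable_mul_norm_of_isBigO_smul hm hmu).congr fun x => ?_
      rw [← Real.rpow_add (by positivity)]
      push_cast
      ring_nf
  obtain ⟨N, hN⟩ := exists_nat_ge (s / r)
  refine (hmultiples N).of_nonneg_of_le (fun x => by positivity) fun x => ?_
  gcongr
  · linarith [norm_nonneg x]
  · exact (div_le_iff₀ hr).1 hN

lemma summable_one_add_norm_sq_rpow_mul_norm_sq [Norm A] {u : G → A} {s : ℝ} (hs : 0 ≤ s)
    (hu : Summable fun x => (1 + ‖x‖) ^ s * ‖u x‖) :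
    Summable fun x => (1 + ‖x‖ ^ 2) ^ s * ‖u x‖ ^ 2 := by
  refine (summable_sq_of_summable hu).of_nonneg_of_le (fun x => by positivity) fun x => ?_
  rw [mul_pow]
  gcongr
  calc (1 + ‖x‖ ^ 2) ^ s ≤ ((1 + ‖x‖) ^ 2) ^ s := by
        gcongr
        nlinarith [norm_nonneg x]
    _ = ((1 + ‖x‖) ^ s) ^ 2 := (Real.rpow_pow_comm (by positivity) s 2).symm

end Regularity

section WhithamSymbol

lemma tanh_strictMono : StrictMono tanh := by
  intro x y hxy
  have hsinh : 0 < sinh (y - x) := sinh_pos_iff.2 (sub_pos.2 hxy)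
  rw [tanh_eq_sinh_div_cosh, tanh_eq_sinh_div_cosh, div_lt_div_iff₀ (cosh_pos x) (cosh_pos y)]
  rw [sinh_sub] at hsinh
  linarith

lemma tanh_pos {x : ℝ} (hx : 0 < x) : 0 < tanh x := by
  simpa using tanh_strictMono hx

lemma mul_tanh_abs (x : ℝ) : |x| * tanh |x| = x * tanh x := by
  rcases abs_choice x with h | h <;> simp [h]

lemma mul_tanh_nonneg (x : ℝ) : 0 ≤ x * tanh x := by
  rw [← mul_tanh_abs]
  exact mul_nonneg (abs_nonneg x) (by simpa using tanh_strictMono.monotone (abs_nonneg x))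

variable {g d T : ℝ}

lemma sqrt_mul_tanh_le_mW (hg : 0 < g) (hd : 0 < d) (z : ℝ) :
    √(T / d * (z * tanh z)) ≤ mW g d T z := by
  rcases eq_or_ne z 0 with rfl | hz
  · simp [mW]
  have hsplit : g * d * (1 + T / (g * d ^ 2) * z ^ 2) * tanh z / z =
      g * d * (z * tanh z) / z ^ 2 + T / d * (z * tanh z) := by
    field_simp
  have hgravity : 0 ≤ g * d * (z * tanh z) / z ^ 2 := by
    have := mul_tanh_nonneg z
    positivity
  rw [mW, if_neg hz, hsplit]
  exact sqrt_le_sqrt (le_add_of_nonneg_left hgravity)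

lemma isBigO_abs_rpow_mW (hg : 0 < g) (hd : 0 < d) (hT : 0 < T) :
    (fun z : ℝ => |z| ^ (1 / 2 : ℝ)) =O[cocompact ℝ] mW g d T := by
  have hκ : 0 < T / d * tanh 1 := mul_pos (by positivity) (tanh_pos one_pos)
  refine IsBigO.of_bound (√(T / d * tanh 1))⁻¹ ?_
  filter_upwards [tendsto_norm_cocompact_atTop.eventually_ge_atTop 1] with z hz
  rw [norm_eq_abs] at hz
  have hmul_tanh : |z| * tanh 1 ≤ z * tanh z := by
    rw [← mul_tanh_abs]
    gcongr
    exact tanh_strictMono.monotone hz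
  rw [← sqrt_eq_rpow, norm_of_nonneg (sqrt_nonneg _), le_inv_mul_iff₀ (sqrt_pos.2 hκ),
    ← sqrt_mul hκ.le]
  calc √(T / d * tanh 1 * |z|) = √(T / d * (|z| * tanh 1)) := by ring_nf
    _ ≤ √(T / d * (z * tanh z)) := by gcongr
    _ ≤ mW g d T z := sqrt_mul_tanh_le_mW hg hd z
    _ ≤ ‖mW g d T z‖ := le_norm_self _

lemma isBigO_abs_rpow_const_sub_mW (hg : 0 < g) (hd : 0 < d) (hT : 0 < T) (c : ℂ) :
    (fun z : ℝ => |z| ^ (1 / 2 : ℝ)) =O[cocompact ℝ] fun z => c - (mW g d T z : ℂ) := by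
  have hmW : (fun z : ℝ => |z| ^ (1 / 2 : ℝ)) =O[cocompact ℝ] fun z => (mW g d T z : ℂ) :=
    Complex.isBigO_ofReal_right.2 (isBigO_abs_rpow_mW hg hd hT)
  have htendsto : Tendsto (fun z : ℝ => |z| ^ (1 / 2 : ℝ)) (cocompact ℝ) atTop :=
    (tendsto_rpow_atTop (by norm_num)).comp tendsto_norm_cocompact_atTop
  have hconst : (fun _ : ℝ => c) =o[cocompact ℝ] fun z : ℝ => |z| ^ (1 / 2 : ℝ) :=
    isLittleO_const_left.2 (Or.inr (tendsto_norm_atTop_atTop.comp htendsto))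
  have hsub := hmW.trans (hconst.trans_isBigO hmW).right_isBigO_sub
  simpa only [neg_sub] using hsub.neg_right

lemma isBigO_one_add_norm_int_mul {k : ℝ} (hk : k ≠ 0) :
    (fun n : ℤ => 1 + ‖n‖) =O[cofinite] fun n : ℤ => |k * n| := by
  refine IsBigO.of_bound (2 / |k|) ?_
  filter_upwards [eventually_cofinite_ne (0 : ℤ)] with n hn
  have hn1 : (1 : ℝ) ≤ ‖n‖ := by
    rw [Int.norm_eq_abs]
    exact_mod_cast Int.one_le_abs hn
  have := abs_pos.2 hk
  rw [norm_of_nonneg (by positivity), norm_eq_abs, abs_abs, abs_mul, ← Int.norm_eq_abs]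
  field_simp
  linarith

lemma isBigO_one_add_norm_rpow_const_sub_mW (hg : 0 < g) (hd : 0 < d) (hT : 0 < T) {k : ℝ}
    (hk : k ≠ 0) (c : ℂ) :
    (fun n : ℤ => (1 + ‖n‖) ^ (1 / 2 : ℝ)) =O[cofinite] fun n => c - (mW g d T (k * n) : ℂ) := by
  have htendsto : Tendsto (fun n : ℤ => k * (n : ℝ)) cofinite (cocompact ℝ) :=
    (tendsto_cocompact_mul_left₀ hk).comp Int.tendsto_coe_cofinite
  have hweight := (isBigO_one_add_norm_int_mul hk).rpow (r := 1 / 2) (by norm_num)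
    (.of_forall fun n => abs_nonneg _)
  exact hweight.trans ((isBigO_abs_rpow_const_sub_mW hg hd hT c).comp_tendsto htendsto)

end WhithamSymbol

lemma summable_norm_of_summable_one_add_sq_mul_norm_sq {E : Type*} [Norm E]
    {u : ℤ → E} (hu : Summable fun n : ℤ => (1 + (n : ℝ) ^ 2) * ‖u n‖ ^ 2) :
    Summable fun n => ‖u n‖ := by
  refine summable_of_summable_inv_of_summable_mul_sq (fun n => by positivity) ?_ hu
  have hbound : (fun n : ℤ => (1 + (n : ℝ) ^ 2)⁻¹) =O[cofinite] fun n : ℤ => 1 / (n : ℝ) ^ 2 := by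
    refine IsBigO.of_bound 1 ?_
    filter_upwards [eventually_cofinite_ne (0 : ℤ)] with n hn
    have hn_sq : 0 < (n : ℝ) ^ 2 := sq_pos_of_ne_zero (Int.cast_ne_zero.2 hn)
    rw [one_mul, norm_of_nonneg (by positivity), norm_of_nonneg (by positivity), one_div]
    exact inv_anti₀ hn_sq (by linarith)
  exact summable_of_isBigO (summable_one_div_int_pow.2 one_lt_two) hbound

theorem whitham_steady_solution_smooth_general {g d T : ℝ} (hg : 0 < g) (hd : 0 < d) (hT : 0 < T)
    {k : ℝ} (hk : k ≠ 0) {c b : ℂ} {wh : ℤ → ℂ} (hwh : Summable fun n => ‖wh n‖)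
    (heq : ∀ n : ℤ, (mW g d T (k * (n : ℝ)) : ℂ) * wh n - c * wh n +
      (∑' j : ℤ, wh j * wh (n - j)) = if n = 0 then b else 0) :
    ∀ s : ℝ, 0 ≤ s → Summable fun n : ℤ => (1 + (n : ℝ) ^ 2) ^ s * ‖wh n‖ ^ 2 := by
  intro s hs
  have hconv : ∀ᶠ n : ℤ in cofinite,
      (c - (mW g d T (k * n) : ℂ)) • wh n = ∑' j, wh j * wh (n - j) := by
    filter_upwards [eventually_cofinite_ne (0 : ℤ)] with n hn
    have hn_eq := heq n
    rw [if_neg hn] at hn_eq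
    rw [smul_eq_mul]
    linear_combination -hn_eq
  have hweighted := summable_one_add_norm_rpow_mul_norm_of_smul_eq_convolution one_half_pos
    (isBigO_one_add_norm_rpow_const_sub_mW hg hd hT hk c) hconv hwh s
  simpa only [Int.norm_eq_abs, sq_abs] using summable_one_add_norm_sq_rpow_mul_norm_sq hs hweighted

/-- if a real-valued `2π`-periodic `H¹` function `w` (described via its
Fourier coefficients `wh : ℤ → ℂ`, with the reality condition `wh(−n) = conj (wh n)`,
the Fourier coefficients of `w²` being the convolution `∑ⱼ wh j · wh (n−j)`) satisfies
`M_k w − c w + w² = b` in the Fourier sense, then `w` is smooth, i.e. its Fourier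
coefficients lie in every Sobolev space `H^s_{2π}`, `s ≥ 0`. -/
theorem whitham_steady_solution_smooth (g d T : ℝ) (hg : 0 < g) (hd : 0 < d) (hT : 0 < T)
    (k : ℝ) (hk : 0 < k) (c b : ℝ) (wh : ℤ → ℂ)
    (hreal : ∀ n : ℤ, wh (-n) = starRingEnd ℂ (wh n))
    (hH1 : Summable fun n : ℤ => (1 + (n : ℝ) ^ 2) * ‖wh n‖ ^ 2)
    (heq : ∀ n : ℤ,
      (mW g d T (k * (n : ℝ)) : ℂ) * wh n - (c : ℂ) * wh n +
        (∑' j : ℤ, wh j * wh (n - j)) = if n = 0 then (b : ℂ) else 0) :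
    ∀ s : ℝ, 0 ≤ s → Summable fun n : ℤ => (1 + (n : ℝ) ^ 2) ^ s * ‖wh n‖ ^ 2 := by
  exact whitham_steady_solution_smooth_general hg hd hT hk.ne'
    (summable_norm_of_summable_one_add_sq_mul_norm_sq hH1) heq
end

section
/- If T = 0 (the gravity Whitham symbol m(z) = √(gd·tanh(z)/z), m(0) = √(gd)), then the group velocity z ↦ (z·m(z))' is strictly decreasing on (0, ∞) and satisfies (z·m(z))' < m(0) = √(gd) for every z > 0; in particular the group velocity has no critical points on (0, ∞) and never coincides with the long-wave phase speed m(0). -/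
open Real Filter

/-!
Put `q(z) = tanh z / z`, so that `m = √(gd) √q`. Differentiating `z √q` logarithmically gives the
classical formula `(z m(z))' = m(z) · ½(1 + 2z / sinh 2z)` for the group velocity. Both factors are
governed by slopes of secants through the origin: `tanh` is strictly concave on `[0, ∞)` with unit
slope at `0`, so `tanh z / z` decreases strictly from `1`, and `sinh` is strictly convex, so
`2z / sinh 2z` decreases strictly from `1`. A product of two positive decreasing factors inherits
both the monotonicity and the bound by its limit at `0`.
-/

section Secant

variable {𝕜 : Type*} [Field 𝕜] [LinearOrder 𝕜] [IsStrictOrderedRing 𝕜] {s : Set 𝕜} {f : 𝕜 → 𝕜}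

lemma strictMonoOn_div_self_of_strictConvexOn (hf : StrictConvexOn 𝕜 s f) (h0 : 0 ∈ s)
    (hf0 : f 0 = 0) : StrictMonoOn (fun x => f x / x) (s \ {0}) := fun x hx y hy hxy => by
  simpa [hf0] using hf.secant_strict_mono h0 hx.1 hy.1 hx.2 hy.2 hxy

lemma strictAntiOn_div_self_of_strictConcaveOn (hf : StrictConcaveOn 𝕜 s f) (h0 : 0 ∈ s)
    (hf0 : f 0 = 0) : StrictAntiOn (fun x => f x / x) (s \ {0}) := fun x hx y hy hxy => by
  simpa [hf0] using hf.secant_strict_mono h0 hx.1 hy.1 hx.2 hy.2 hxy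

end Secant

lemma strictConvexOn_sinh : StrictConvexOn ℝ (Set.Ici 0) sinh := by
  refine StrictMonoOn.strictConvexOn_of_deriv (convex_Ici 0) continuous_sinh.continuousOn ?_
  rw [Real.deriv_sinh]
  exact cosh_strictMonoOn.mono interior_subset

lemma strictAntiOn_self_div_sinh : StrictAntiOn (fun x => x / sinh x) (Set.Ioi 0) := by
  intro x hx y hy hxy
  have hmono : StrictMonoOn (fun x => sinh x / x) (Set.Ioi 0) := Set.Ici_sdiff_left (a := (0 : ℝ)) ▸
    strictMonoOn_div_self_of_strictConvexOn strictConvexOn_sinh Set.self_mem_Ici sinh_zero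
  have hpos : 0 < sinh x / x := div_pos (sinh_pos_iff.2 hx) hx
  simpa only [inv_div] using inv_strictAnti₀ hpos (hmono hx hy hxy)

lemma hasDerivAt_tanh (x : ℝ) : HasDerivAt tanh (cosh x ^ 2)⁻¹ x := by
  have hquot := (Real.hasDerivAt_sinh x).div (Real.hasDerivAt_cosh x) (cosh_pos x).ne'
  refine (hquot.congr_of_eventuallyEq (.of_forall tanh_eq_sinh_div_cosh)).congr_deriv ?_
  rw [← sq, ← sq, cosh_sq_sub_sinh_sq, one_div]

lemma strictConcaveOn_tanh : StrictConcaveOn ℝ (Set.Ici 0) tanh := by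
  have hcont : Continuous tanh :=
    continuous_iff_continuousAt.2 fun x => (hasDerivAt_tanh x).continuousAt
  refine StrictAntiOn.strictConcaveOn_of_deriv (convex_Ici 0) hcont.continuousOn ?_
  intro x hx y hy hxy
  have hcosh : cosh x < cosh y := cosh_strictMonoOn (interior_subset hx) (interior_subset hy) hxy
  rw [(hasDerivAt_tanh x).deriv, (hasDerivAt_tanh y).deriv]
  gcongr

lemma strictAntiOn_tanh_div_self : StrictAntiOn (fun x => tanh x / x) (Set.Ioi 0) :=
  Set.Ici_sdiff_left (a := (0 : ℝ)) ▸
    strictAntiOn_div_self_of_strictConcaveOn strictConcaveOn_tanh Set.self_mem_Ici tanh_zero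

lemma tanh_div_self_lt_one {x : ℝ} (hx : 0 < x) : tanh x / x < 1 := by
  simpa [slope_def_field] using
    strictConcaveOn_tanh.slope_lt_of_hasDerivAt Set.self_mem_Ici hx.le hx (hasDerivAt_tanh 0)

lemma tanh_div_self_pos {x : ℝ} (hx : x ≠ 0) : 0 < tanh x / x := by
  rw [tanh_eq_sinh_div_cosh, div_right_comm]
  refine div_pos ?_ (cosh_pos x)
  rcases hx.lt_or_gt with hneg | hpos
  · exact div_pos_of_neg_of_neg (sinh_neg_iff.2 hneg) hneg
  · exact div_pos (sinh_pos_iff.2 hpos) hpos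

/-- The classical ratio of group velocity to phase speed for gravity waves, as a function of the
dimensionless wave number. Its limit at `0` is `1`, but its value there is the junk value `1 / 2`,
so it is only meaningful for `z ≠ 0`. -/
noncomputable def groupPhaseRatio (z : ℝ) : ℝ := (1 + 2 * z / sinh (2 * z)) / 2

lemma strictAntiOn_groupPhaseRatio : StrictAntiOn groupPhaseRatio (Set.Ioi 0) := by
  intro x hx y hy hxy
  have hx2 : 0 < 2 * x := mul_pos two_pos hx
  have hy2 : 0 < 2 * y := mul_pos two_pos hy
  have hlt := strictAntiOn_self_div_sinh hx2 hy2 (by linarith)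
  simp only [groupPhaseRatio]
  gcongr

lemma groupPhaseRatio_pos {z : ℝ} (hz : 0 < z) : 0 < groupPhaseRatio z := by
  have h2z : 0 < 2 * z := by positivity
  exact div_pos (add_pos one_pos (div_pos h2z (sinh_pos_iff.2 h2z))) two_pos

lemma groupPhaseRatio_lt_one {z : ℝ} (hz : 0 < z) : groupPhaseRatio z < 1 := by
  have h2z : 0 < 2 * z := by positivity
  have hlt : 2 * z / sinh (2 * z) < 1 :=
    (div_lt_one (sinh_pos_iff.2 h2z)).2 (self_lt_sinh_iff.2 h2z)
  unfold groupPhaseRatio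
  linarith

lemma hasDerivAt_id_mul_sqrt {q : ℝ → ℝ} {q' x : ℝ} (hq : HasDerivAt q q' x) (hq0 : q x ≠ 0) :
    HasDerivAt (fun y => y * √(q y)) (√(q x) * (1 + x * q' / q x / 2)) x := by
  refine ((hasDerivAt_id x).mul (hq.sqrt hq0)).congr_deriv ?_
  have hsqrt : √(q x) / q x = (√(q x))⁻¹ := sqrt_div_self
  simp only [id]
  linear_combination (-(x * q' / 2)) * hsqrt

lemma hasDerivAt_id_mul_sqrt_tanh_div_self {z : ℝ} (hz : z ≠ 0) :
    HasDerivAt (fun y => y * √(tanh y / y)) (√(tanh z / z) * groupPhaseRatio z) z := by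
  have hq : HasDerivAt (fun y => tanh y / y) (((cosh z ^ 2)⁻¹ * z - tanh z * 1) / z ^ 2) z :=
    (hasDerivAt_tanh z).div (hasDerivAt_id z) hz
  have hlog : z * (((cosh z ^ 2)⁻¹ * z - tanh z * 1) / z ^ 2) / (tanh z / z) =
      2 * z / sinh (2 * z) - 1 := by
    have hsinh : sinh z ≠ 0 := sinh_ne_zero.2 hz
    rw [sinh_two_mul, tanh_eq_sinh_div_cosh]
    field_simp
  refine (hasDerivAt_id_mul_sqrt hq (tanh_div_self_pos hz).ne').congr_deriv ?_
  rw [hlog, groupPhaseRatio]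
  ring

lemma mW_nonneg (g d T z : ℝ) : 0 ≤ mW g d T z := by
  unfold mW
  split_ifs <;> exact sqrt_nonneg _

lemma mW_zero_tension (g d : ℝ) {z : ℝ} (hz : z ≠ 0) :
    mW g d 0 z = √(g * d) * √(tanh z / z) := by
  rw [← sqrt_mul' _ (tanh_div_self_pos hz).le]
  simp [mW, hz, mul_div_assoc]

lemma strictAntiOn_mW_zero_tension {g d : ℝ} (hgd : 0 < g * d) :
    StrictAntiOn (mW g d 0) (Set.Ioi 0) := by
  intro x hx y hy hxy
  rw [mW_zero_tension g d (ne_of_gt hx), mW_zero_tension g d (ne_of_gt hy)]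
  exact mul_lt_mul_of_pos_left
    (sqrt_lt_sqrt (tanh_div_self_pos (ne_of_gt hy)).le (strictAntiOn_tanh_div_self hx hy hxy))
    (sqrt_pos.2 hgd)

lemma mW_zero_tension_lt {g d : ℝ} (hgd : 0 < g * d) {z : ℝ} (hz : 0 < z) :
    mW g d 0 z < √(g * d) := by
  rw [mW_zero_tension g d hz.ne']
  exact mul_lt_of_lt_one_right (sqrt_pos.2 hgd)
    ((sqrt_lt' one_pos).2 (by simpa using tanh_div_self_lt_one hz))

lemma hasDerivAt_id_mul_mW_zero_tension (g d : ℝ) {z : ℝ} (hz : z ≠ 0) :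
    HasDerivAt (fun y => y * mW g d 0 y) (mW g d 0 z * groupPhaseRatio z) z := by
  have hm : (fun y => y * mW g d 0 y) =ᶠ[nhds z] fun y => √(g * d) * (y * √(tanh y / y)) := by
    filter_upwards [eventually_ne_nhds hz] with y hy
    rw [mW_zero_tension g d hy, mul_left_comm]
  rw [mW_zero_tension g d hz, mul_assoc]
  exact ((hasDerivAt_id_mul_sqrt_tanh_div_self hz).const_mul _).congr_of_eventuallyEq hm

/-- for `T = 0`, the group velocity `z ↦ (z m(z))'` is strictly decreasing
on `(0,∞)` and satisfies `(z m(z))' < m(0) = √(gd)` for every `z > 0`; in particular it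
has no critical points on `(0,∞)` and never equals the long-wave phase speed `m(0)`. -/
theorem gravity_whitham_group_velocity (g d : ℝ) (hg : 0 < g) (hd : 0 < d) :
    mW g d 0 0 = Real.sqrt (g * d) ∧
    StrictAntiOn (deriv fun z : ℝ => z * mW g d 0 z) (Set.Ioi 0) ∧
    ∀ z : ℝ, 0 < z → deriv (fun z : ℝ => z * mW g d 0 z) z < Real.sqrt (g * d) := by
  have hgd : 0 < g * d := mul_pos hg hd
  have hgroup {z : ℝ} (hz : 0 < z) :
      deriv (fun z : ℝ => z * mW g d 0 z) z = mW g d 0 z * groupPhaseRatio z :=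
    (hasDerivAt_id_mul_mW_zero_tension g d hz.ne').deriv
  refine ⟨if_pos rfl, fun x hx y hy hxy => ?_, fun z hz => ?_⟩
  · rw [hgroup hx, hgroup hy]
    exact mul_lt_mul'' (strictAntiOn_mW_zero_tension hgd hx hy hxy)
      (strictAntiOn_groupPhaseRatio hx hy hxy) (mW_nonneg g d 0 y) (groupPhaseRatio_pos hy).le
  · rw [hgroup hz]
    calc mW g d 0 z * groupPhaseRatio z ≤ mW g d 0 z :=
          mul_le_of_le_one_right (mW_nonneg g d 0 z) (groupPhaseRatio_lt_one hz).le
      _ < √(g * d) := mW_zero_tension_lt hgd hz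
end
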